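/- arXiv:2010.06736 — 2 statements merged into one kernel-verified Lean document; each statement's English description precedes it below -/
import Mathlib

section
/- Let T be a tree in which every vertex has degree at least 2, and let B be the set of vertices of T of degree at least 3. Then for every finite nonempty set K of vertices of T, the exterior vertex boundary of K in T (vertices outside K adjacent to a vertex of K) has cardinality at least |K ∩ B| + 2. -/
theorem parent_unique_aux {V : Type*} (T : SimpleGraph V) (htree : T.IsTree) (r x1 x2 y : V)
    (h1 : T.Adj x1 y) (h2 : T.Adj x2 y) (d1 : T.dist r x1 < T.dist r y)
    (d2 : T.dist r x2 < T.dist r y) : x1 = x2 := by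
  have key : ∀ x, T.Adj x y → T.dist r x < T.dist r y →
      ∃ p : T.Walk r y, p.IsPath ∧ p.penultimate = x := by
    intro x hx dx
    obtain ⟨p, hp⟩ := htree.connected.exists_walk_length_eq_dist r x
    refine ⟨p.concat hx, ?_, by simp⟩
    apply SimpleGraph.Walk.isPath_of_length_eq_dist
    have := SimpleGraph.dist_le (p.concat hx)
    rw [SimpleGraph.Walk.length_concat] at this ⊢
    omega
  obtain ⟨p, hp, e1⟩ := key x1 h1 d1
  obtain ⟨q, hq, e2⟩ := key x2 h2 d2
  have : p = q := (htree.existsUnique_path r y).unique hp hq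
  rw [← e1, ← e2, this]

/-- Lemma (bound on furcations): In a tree `T` in which every vertex has degree at
least 2, with `B` the set of vertices of degree at least 3, every finite nonempty
set `K` of vertices satisfies `|Δ_v K| ≥ |K ∩ B| + 2`, where `Δ_v K` is the set of
vertices outside `K` adjacent to a vertex of `K`. -/
theorem stmt0 {V : Type*} (T : SimpleGraph V) [T.LocallyFinite]
    (htree : T.IsTree) (hdeg : ∀ u : V, 2 ≤ T.degree u)
    (K : Finset V) (hK : K.Nonempty) :
    (K.filter (fun u => 3 ≤ T.degree u)).card + 2 ≤
      {y : V | y ∉ K ∧ ∃ x ∈ K, T.Adj x y}.ncard := by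
  classical
  obtain ⟨r, hr⟩ := hK
  set D : Set V := {y : V | y ∉ K ∧ ∃ x ∈ K, T.Adj x y} with hD
  have hfin : D.Finite := by
    apply (K.biUnion (fun x => T.neighborFinset x)).finite_toSet.subset
    rintro y ⟨-, x, hx, hxy⟩
    simp only [Finset.coe_biUnion, Set.mem_iUnion]
    exact ⟨x, hx, by simpa using hxy⟩
  rw [Set.ncard_eq_toFinset_card D hfin]
  set F := hfin.toFinset with hF
  let lo : V → Finset V := fun x => (T.neighborFinset x).filter (fun y => T.dist r y < T.dist r x)
  let hi : V → Finset V := fun x => (T.neighborFinset x).filter (fun y => T.dist r x < T.dist r y)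
  have hsplit : ∀ x, T.degree x ≤ (lo x).card + (hi x).card := by
    intro x
    rw [← SimpleGraph.card_neighborFinset_eq_degree]
    refine le_trans (Finset.card_le_card ?_) (Finset.card_union_le _ _)
    intro y hy
    have hxy : T.Adj x y := by simpa using hy
    have hne := htree.dist_ne_of_adj r hxy
    simp only [lo, hi, Finset.mem_union, Finset.mem_filter]
    rcases lt_or_gt_of_ne hne with h | h
    · exact Or.inr ⟨hy, h⟩
    · exact Or.inl ⟨hy, h⟩
  have hlo : ∀ x, (lo x).card ≤ 1 := by
    intro x
    rw [Finset.card_le_one]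
    intro a ha b hb
    simp only [lo, Finset.mem_filter, SimpleGraph.mem_neighborFinset] at ha hb
    exact parent_unique_aux T htree r a b x ha.1.symm hb.1.symm ha.2 hb.2
  have hlor : (lo r).card = 0 := by
    simp [lo]
  have hlosum : ∑ x ∈ K, (lo x).card + 1 ≤ K.card := by
    rw [← Finset.add_sum_erase K _ hr, hlor, ← Finset.card_erase_add_one hr]
    have := Finset.sum_le_card_nsmul (K.erase r) (fun x => (lo x).card) 1 (fun x _ => hlo x)
    simp only [smul_eq_mul, mul_one] at this
    omega
  have hhisum : ∑ x ∈ K, (hi x).card + 1 ≤ K.card + F.card := by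
    rw [← Finset.card_biUnion]
    · refine le_trans ?_ (Finset.card_union_le K F)
      rw [← Finset.card_erase_add_one (Finset.mem_union_left F hr)]
      apply Nat.succ_le_succ
      apply Finset.card_le_card
      intro y hy
      simp only [hi, Finset.mem_biUnion, Finset.mem_filter, SimpleGraph.mem_neighborFinset] at hy
      obtain ⟨x, hx, hxy, hd⟩ := hy
      rw [Finset.mem_erase, Finset.mem_union]
      refine ⟨?_, ?_⟩
      · rintro rfl
        simp at hd
      · by_cases hyK : y ∈ K
        · exact Or.inl hyK
        · exact Or.inr (hfin.mem_toFinset.2 ⟨hyK, x, hx, hxy⟩)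
    · intro a _ b _ hab
      rw [Function.onFun, Finset.disjoint_left]
      intro y ha hb
      simp only [hi, Finset.mem_filter, SimpleGraph.mem_neighborFinset] at ha hb
      exact hab (parent_unique_aux T htree r a b y ha.1 hb.1 ha.2 hb.2)
  have hsum : ∑ x ∈ K, T.degree x ≤ ∑ x ∈ K, (lo x).card + ∑ x ∈ K, (hi x).card := by
    rw [← Finset.sum_add_distrib]
    exact Finset.sum_le_sum (fun x _ => hsplit x)
  have hB : 2 * K.card + (K.filter (fun u => 3 ≤ T.degree u)).card ≤ ∑ x ∈ K, T.degree x := by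
    rw [Finset.card_filter, mul_comm, ← smul_eq_mul, ← Finset.sum_const,
      ← Finset.sum_add_distrib]
    apply Finset.sum_le_sum
    intro x _
    have := hdeg x
    split_ifs <;> omega
  omega
end

section
/- For d > s ≥ 1 and n ≥ 2, the number of points x on the boundary ∂B_n = B_n \ B_{n−1} of the box B_n = {−n,…,n}^d with dist(x, H) < r is at most C · n^{s−1} · r^{d−s} for a constant C depending only on d and s, where H = ℤ^s × {0}^{d−s} and dist(x,H) = max over the last d−s coordinates of |x_i| (the ℓ^∞ distance from x to H). -/
theorem prod_aux (d s : ℕ) (hds : s < d) (a b : ℝ) :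
    ∏ i : Fin d, (3 * (if (i : ℕ) < s then a else b)) = 3 ^ d * a ^ s * b ^ (d - s) := by
  rw [Finset.prod_mul_distrib, Fin.prod_univ_eq_prod_range (fun i => if i < s then a else b) d]
  obtain ⟨k, rfl⟩ := Nat.exists_eq_add_of_lt hds
  rw [add_assoc, Finset.prod_range_add]
  have h1 : ∏ x ∈ Finset.range s, (if x < s then a else b) = a ^ s := by
    rw [Finset.prod_congr rfl (g := fun _ => a)]
    · simp
    · intro x hx
      simp [Finset.mem_range.1 hx]
  rw [h1]
  simp [mul_assoc]

/-- For `d > s ≥ 1`, the number of points `x` of `∂B_n = B_n \ B_{n-1}` in `ℤ^d`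
with `dist(x,H) < r` (sup-distance to `H = ℤ^s × {0}^{d-s}`, i.e. all of the
last `d-s` coordinates are `< r` in absolute value) is at most
`C n^(s-1) r^(d-s)` for a constant `C = C(d,s)`. -/
theorem stmt8 (d s : ℕ) (hs : 1 ≤ s) (hds : s < d) :
    ∃ C : ℝ, 0 < C ∧ ∀ n : ℕ, 2 ≤ n → ∀ r : ℝ, 1 ≤ r →
      ({x : Fin d → ℤ | (∀ i, |x i| ≤ (n : ℤ)) ∧ ¬ (∀ i, |x i| ≤ (n : ℤ) - 1) ∧
          (∀ i : Fin d, s ≤ (i : ℕ) → (|x i| : ℝ) < r)}.ncard : ℝ) ≤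
        C * (n : ℝ) ^ (s - 1) * r ^ (d - s) := by
  classical
  refine ⟨d * 3 ^ d, by have : 0 < d := by omega
                        positivity, ?_⟩
  intro n hn r hr
  have hnR : (2 : ℝ) ≤ n := by exact_mod_cast hn
  obtain ⟨k, hk⟩ : ∃ k : ℕ, k = ⌊r⌋₊ := ⟨_, rfl⟩
  have hkr : (k : ℝ) ≤ r := by rw [hk]; exact Nat.floor_le (by linarith)
  let t : Fin d → Fin d → Finset ℤ := fun j i =>
    if i = j then {(n : ℤ), -(n : ℤ)} else
      if (i : ℕ) < s then Finset.Icc (-(n : ℤ)) n else Finset.Icc (-(k : ℤ)) k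
  let J : Finset (Fin d) := Finset.univ.filter (fun j => s ≤ (j : ℕ) → (n : ℝ) < r)
  let F : Finset (Fin d → ℤ) := J.biUnion (fun j => Fintype.piFinset (t j))
  have hsub : {x : Fin d → ℤ | (∀ i, |x i| ≤ (n : ℤ)) ∧ ¬ (∀ i, |x i| ≤ (n : ℤ) - 1) ∧
          (∀ i : Fin d, s ≤ (i : ℕ) → (|x i| : ℝ) < r)} ⊆ (F : Set (Fin d → ℤ)) := by
    rintro x ⟨h1, h2, h3⟩
    push Not at h2
    obtain ⟨j, hj⟩ := h2
    have hjn : |x j| = n := le_antisymm (h1 j) (by omega)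
    have hjn' : |(x j : ℝ)| = n := by exact_mod_cast hjn
    simp only [F, J, Finset.coe_biUnion, Set.mem_iUnion, Finset.mem_coe, Finset.mem_filter,
      Finset.mem_univ, true_and, Fintype.mem_piFinset]
    refine ⟨j, fun h => hjn' ▸ h3 j h, fun i => ?_⟩
    simp only [t]
    split_ifs with ha hb
    · subst ha
      simp only [Finset.mem_insert, Finset.mem_singleton]
      exact (abs_eq (by positivity)).1 hjn
    · rw [Finset.mem_Icc]; exact abs_le.1 (h1 i)
    · rw [Finset.mem_Icc]
      apply abs_le.1
      have h := h3 i (by omega)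
      have h4 : ((x i).natAbs : ℝ) ≤ r := by
        rw [Nat.cast_natAbs]; push_cast; exact h.le
      have h5 := Nat.le_floor h4
      rw [Int.abs_eq_natAbs]
      omega
  have hcard : ∀ j ∈ J, ((Fintype.piFinset (t j)).card : ℝ) ≤
      3 ^ d * (n : ℝ) ^ (s - 1) * r ^ (d - s) := by
    intro j hj
    have hj' : s ≤ (j : ℕ) → (n : ℝ) < r := by simpa [J] using hj
    have key : ((Fintype.piFinset (t j)).card : ℝ) * n ≤ 3 ^ d * (n : ℝ) ^ s * r ^ (d - s) := by
      rw [← prod_aux d s hds, Fintype.card_piFinset]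
      have : (n : ℝ) = ∏ i : Fin d, (if i = j then (n : ℝ) else 1) := by
        rw [Finset.prod_ite_eq' Finset.univ j (fun _ => (n : ℝ))]
        rw [if_pos (Finset.mem_univ j)]
      push_cast
      conv_lhs => arg 2; rw [this]
      rw [← Finset.prod_mul_distrib]
      apply Finset.prod_le_prod
      · intro i _
        refine mul_nonneg (Nat.cast_nonneg _) ?_
        split_ifs
        · linarith
        · exact zero_le_one
      · intro i _
        by_cases ha : i = j
        · subst ha
          have h2 : ((t i i).card : ℝ) ≤ 2 := by
            simp only [t, if_true]
            exact_mod_cast Finset.card_le_two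
          simp only [if_true]
          split_ifs with hb
          · nlinarith
          · have := hj' (by omega)
            nlinarith
        · simp only [t, if_neg ha, mul_one]
          split_ifs with hb
          · rw [Int.card_Icc]
            have : ((n : ℤ) + 1 - -(n : ℤ)).toNat = 2 * n + 1 := by omega
            rw [this]; push_cast; linarith
          · rw [Int.card_Icc]
            have : ((k : ℤ) + 1 - -(k : ℤ)).toNat = 2 * k + 1 := by omega
            rw [this]; push_cast; linarith
    have hp : (n : ℝ) ^ s = n ^ (s - 1) * n := by
      rw [← pow_succ]; congr 1; omega
    rw [hp] at key
    refine le_of_mul_le_mul_right (a := (n : ℝ)) ?_ (by linarith)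
    linarith
  have hb : (0 : ℝ) ≤ 3 ^ d * (n : ℝ) ^ (s - 1) * r ^ (d - s) := by positivity
  calc _ ≤ (F.card : ℝ) := by
        have := Set.ncard_le_ncard hsub F.finite_toSet
        rw [Set.ncard_coe_finset] at this
        exact_mod_cast this
    _ ≤ ∑ j ∈ J, ((Fintype.piFinset (t j)).card : ℝ) := by
        exact_mod_cast Finset.card_biUnion_le
    _ ≤ J.card • (3 ^ d * (n : ℝ) ^ (s - 1) * r ^ (d - s)) := Finset.sum_le_card_nsmul _ _ _ hcard
    _ ≤ (d : ℝ) * (3 ^ d * (n : ℝ) ^ (s - 1) * r ^ (d - s)) := by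
        rw [nsmul_eq_mul]
        apply mul_le_mul_of_nonneg_right _ hb
        have : J.card ≤ d := by simpa using Finset.card_le_univ J
        exact_mod_cast this
    _ = _ := by ring
end
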